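/- arXiv:2208.05897 — 4 statements merged into one kernel-verified Lean document; each statement's English description precedes it below -/
import Mathlib

section
/- The dynamic-programming threshold coincides with n*_N and is independent of the cost c: min{ n ∈ {1, …, N} : V_n(0) ≤ n/N } = n*_N (the set on the left is nonempty because V_N(0) = 0). -/
/-!
Write `S n = ∑_{k=n}^{N-1} 1/k`. Since `V_{n+1}(1) ≥ (n+1)/N`, the recursion for `V_n(0)` gives
`V_n(0) ≥ 1/N + (n/(n+1)) V_{n+1}(0)`, hence `V_n(0) ≥ (n/N) S n` by backward induction. When
`S n ≤ 1`, also `S m ≤ 1` for all later `m`; there `V_m(0) = (m/N) S m ≤ m/N`, the maximum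
defining `V_m(1)` is attained at `m/N` (the other entry is a convex combination of `m/N` and
`V_m(0)`), and all the inequalities are equalities. Consequently `V_n(0) ≤ n/N` holds exactly when
`S n ≤ 1`, so the two sets whose minima are compared are equal, whatever the value of `c`.
-/

open Finset Filter Topology

/-- Threshold `n*_N = min{ n ∈ {1,…,N} : ∑_{k=n}^{N-1} 1/k ≤ 1 }`
(the sum is empty, equal to 0, when `n = N`, so the minimum exists). -/
noncomputable def nstar (N : ℕ) : ℕ :=
  sInf {n : ℕ | 1 ≤ n ∧ n ≤ N ∧ ∑ k ∈ Finset.Ico n N, (1 : ℝ) / k ≤ 1}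

/-- Value functions: `(secV c N n).1` is `V_{n,N}(0)` and `(secV c N n).2` is `V_{n,N}(1)`,
defined by backward recursion: `V_{N,N}(0) = 0`, `V_{N,N}(1) = 1`; for `1 ≤ n ≤ N-1`,
`V_{n,N}(0) = (1/(n+1))·V_{n+1,N}(1) + (n/(n+1))·V_{n+1,N}(0)` and
`V_{n,N}(1) = max{ c·(n/N) + (1-c)·V_{n,N}(0), n/N }`; and
`V_{0,N}(0) = max{ c/N + (1-c)·V_{1,N}(0), 1/N }` (the value `V_{0,N}(1)` is unused, set to 0). -/
noncomputable def secV (c : ℝ) (N : ℕ) (n : ℕ) : ℝ × ℝ :=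
  if _h : N ≤ n then (0, 1)
  else
    let next := secV c N (n + 1)
    if n = 0 then
      (max (c / N + (1 - c) * next.1) (1 / N), 0)
    else
      let v0 := (1 / ((n : ℝ) + 1)) * next.2 + ((n : ℝ) / ((n : ℝ) + 1)) * next.1
      (v0, max (c * ((n : ℝ) / N) + (1 - c) * v0) ((n : ℝ) / N))
termination_by N - n
decreasing_by omega

lemma secV_self (c : ℝ) (N : ℕ) : secV c N N = (0, 1) := by
  rw [secV]; simp

lemma secV_fst (c : ℝ) {N n : ℕ} (h0 : 1 ≤ n) (h : n < N) :
    (secV c N n).1 = (1 / ((n : ℝ) + 1)) * (secV c N (n + 1)).2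
      + ((n : ℝ) / ((n : ℝ) + 1)) * (secV c N (n + 1)).1 := by
  rw [secV, dif_neg (by omega)]
  simp only [if_neg (show n ≠ 0 by omega)]

lemma secV_snd (c : ℝ) {N n : ℕ} (h0 : 1 ≤ n) (h : n < N) :
    (secV c N n).2 = max (c * ((n : ℝ) / N) + (1 - c) * (secV c N n).1) ((n : ℝ) / N) := by
  rw [secV_fst c h0 h, secV, dif_neg (by omega)]
  simp only [if_neg (show n ≠ 0 by omega)]

/-- The value functions dominate those of the rule that stops at the first available record,
and agree with them as soon as the tail of the harmonic sum is at most `1`. -/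
lemma secV_bounds {N : ℕ} (hN : 2 ≤ N) {c : ℝ} (hc1 : c < 1) {n : ℕ} (h0 : 1 ≤ n) (hn : n ≤ N) :
    ((n : ℝ) / N * ∑ k ∈ Finset.Ico n N, (1 : ℝ) / k ≤ (secV c N n).1 ∧
      (n : ℝ) / N ≤ (secV c N n).2) ∧
    (∑ k ∈ Finset.Ico n N, (1 : ℝ) / k ≤ 1 →
      (secV c N n).1 = (n : ℝ) / N * ∑ k ∈ Finset.Ico n N, (1 : ℝ) / k ∧
      (secV c N n).2 = (n : ℝ) / N) := by
  have hN0 : (0 : ℝ) < N := by exact_mod_cast (show 0 < N by omega)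
  induction hn using Nat.decreasingInduction with
  | self => simp [secV_self, hN0.ne']
  | of_succ n hn ih =>
    obtain ⟨⟨h1, h2⟩, h3⟩ := ih (by omega)
    have hn0 : (0 : ℝ) < n := by exact_mod_cast h0
    have hV := secV_fst c h0 hn
    have hW := secV_snd c h0 hn
    rw [Finset.sum_eq_sum_Ico_succ_bot hn]
    push_cast at h1 h2 h3
    set S := ∑ k ∈ Finset.Ico (n + 1) N, (1 : ℝ) / k
    have key : (n : ℝ) / N * (1 / n + S) = (1 / ((n : ℝ) + 1)) * (((n : ℝ) + 1) / N)
        + ((n : ℝ) / ((n : ℝ) + 1)) * (((n : ℝ) + 1) / N * S) := by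
      field_simp
    refine ⟨⟨?_, ?_⟩, fun hS => ?_⟩
    · rw [hV, key]
      gcongr
    · rw [hW]
      exact le_max_right _ _
    · have hpos : 0 < 1 / (n : ℝ) := by positivity
      obtain ⟨e1, e2⟩ := h3 (by linarith)
      have hv : (secV c N n).1 = (n : ℝ) / N * (1 / n + S) := by rw [hV, key, e1, e2]
      have hle : (secV c N n).1 ≤ (n : ℝ) / N := by
        rw [hv]
        exact mul_le_of_le_one_right (by positivity) hS
      refine ⟨hv, ?_⟩
      rw [hW]
      apply max_eq_right
      nlinarith

/-- The dynamic-programming threshold coincides with `n*_N` and is independent of the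
cost `c`: `min{ n ∈ {1,…,N} : V_n(0) ≤ n/N } = n*_N`. -/
theorem dp_threshold_eq_nstar (N : ℕ) (hN : 2 ≤ N) (c : ℝ) (hc0 : 0 ≤ c) (hc1 : c < 1) :
    sInf {n : ℕ | 1 ≤ n ∧ n ≤ N ∧ (secV c N n).1 ≤ (n : ℝ) / N} = nstar N := by
  unfold nstar
  congr 1
  ext n
  simp only [Set.mem_ofPred_eq]
  refine and_congr_right fun h0 => and_congr_right fun hn => ?_
  obtain ⟨⟨h1, -⟩, h3⟩ := secV_bounds hN hc1 h0 hn
  have hpos : (0 : ℝ) < (n : ℝ) / N :=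
    div_pos (by exact_mod_cast h0) (by exact_mod_cast (show 0 < N by omega))
  constructor
  · intro h
    exact (mul_le_iff_le_one_right hpos).1 (h1.trans h)
  · intro h
    rw [(h3 h).1]
    exact mul_le_of_le_one_right hpos.le h
end

section
/- The value in state 0 satisfies the piecewise one-step recursion: for every integer n with 1 ≤ n ≤ N, if n < n*_N then V_{n-1}(0) = c/N + (1 - c/n)·V_n(0), while if n ≥ n*_N then V_{n-1}(0) = 1/N + (1 - 1/n)·V_n(0). -/
/-!
Write `v n = (secV c N n).1` and `S n = ∑_{k=n}^{N-1} 1/k`. Eliminating the value in state 1 gives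
`v (n-1) = (1/n) * max (c*n/N + (1-c) * v n) (n/N) + ((n-1)/n) * v n` for all `1 ≤ n ≤ N`
(`secV_pred`), so, as `c < 1`, the first branch of the maximum is active when `n/N ≤ v n` and the
second when `v n ≤ n/N`. The theorem therefore says that `v n` crosses `n/N` at `nstar N`.

Bounding the maximum below by `n/N` shows `(n/N) * S n ≤ v n` for every `n` (`secV_lower`), and
below the threshold `S n > 1`. From the threshold on, `S n ≤ 1` and backward induction gives the
equality `v n = (n/N) * S n` (`secV_eq`), hence `v n ≤ n/N`.
-/

open Finset Filter Topology

/-- The scalar recursion for the value in state 0, valid up to both endpoints: at `n = N` because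
the terminal value `1` is `max c 1`, and at `n = 1` because the weight of `V_1(0)` vanishes. -/
lemma secV_pred (N : ℕ) (c : ℝ) (hc1 : c < 1) (n : ℕ) (hn1 : 1 ≤ n) (hn2 : n ≤ N) :
    (secV c N (n - 1)).1 =
      (1 / (n : ℝ)) * max (c * ((n : ℝ) / N) + (1 - c) * (secV c N n).1) ((n : ℝ) / N)
        + (((n : ℝ) - 1) / n) * (secV c N n).1 := by
  obtain ⟨m, rfl⟩ : ∃ m, n = m + 1 := ⟨n - 1, by omega⟩
  have hm : ¬ N ≤ m := by omega
  have h2 : (secV c N (m + 1)).2 =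
      max (c * (((m + 1 : ℕ) : ℝ) / N) + (1 - c) * (secV c N (m + 1)).1)
        (((m + 1 : ℕ) : ℝ) / N) := by
    rcases hn2.eq_or_lt with h | h
    · have hN : (N : ℝ) ≠ 0 := by
        have : N ≠ 0 := by omega
        exact_mod_cast this
      rw [h, secV]
      simp [div_self hN, hc1.le]
    · rw [secV]
      simp [Nat.not_le.mpr h]
  rw [Nat.add_sub_cancel]
  rcases Nat.eq_zero_or_pos m with rfl | hpos
  · rw [secV]
    simp [hm, div_eq_mul_inv]
  · conv_lhs => rw [secV]
    simp only [hm, dite_false, hpos.ne', if_false]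
    rw [h2]
    push_cast
    ring

/-- `(n/N) * ∑_{k=n}^{N-1} 1/k` satisfies the recursion of the second branch. -/
lemma harmonic_step (N n : ℕ) (hn1 : 1 ≤ n) (hn : n < N) :
    ((n : ℝ) / N) * ∑ k ∈ Finset.Ico n N, (1 : ℝ) / k =
      1 / N + (n / ((n : ℝ) + 1)) *
        ((((n + 1 : ℕ) : ℝ) / N) * ∑ k ∈ Finset.Ico (n + 1) N, (1 : ℝ) / k) := by
  have h0 : (n : ℝ) ≠ 0 := by
    have : n ≠ 0 := by omega
    exact_mod_cast this
  have h1 : (n : ℝ) + 1 ≠ 0 := by positivity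
  have hN : (N : ℝ) ≠ 0 := by
    have : N ≠ 0 := by omega
    exact_mod_cast this
  rw [Finset.sum_eq_sum_Ico_succ_bot hn]
  push_cast
  field_simp

/-- The value in state 0 dominates the value of always taking the second branch. -/
lemma secV_lower (N : ℕ) (c : ℝ) (hc1 : c < 1) (n : ℕ) (hn1 : 1 ≤ n) (hn2 : n ≤ N) :
    ((n : ℝ) / N) * ∑ k ∈ Finset.Ico n N, (1 : ℝ) / k ≤ (secV c N n).1 := by
  induction hn2 using Nat.decreasingInduction with
  | self => rw [secV]; simp
  | of_succ n hn ih =>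
    have h := secV_pred N c hc1 (n + 1) (by omega) hn
    rw [Nat.add_sub_cancel] at h
    rw [h, harmonic_step N n hn1 hn]
    have e1 : (1 : ℝ) / N = 1 / ((n + 1 : ℕ) : ℝ) * (((n + 1 : ℕ) : ℝ) / N) := by
      have : ((n + 1 : ℕ) : ℝ) ≠ 0 := by positivity
      field_simp
    have e2 : (((n + 1 : ℕ) : ℝ) - 1) / ((n + 1 : ℕ) : ℝ) = n / ((n : ℝ) + 1) := by
      push_cast; ring
    rw [e1, e2]
    have := ih (by omega)
    gcongr
    exact le_max_right _ _

lemma secV_pred_of_ge (N : ℕ) (c : ℝ) (hc1 : c < 1) (n : ℕ) (hn1 : 1 ≤ n) (hn2 : n ≤ N)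
    (h : (n : ℝ) / N ≤ (secV c N n).1) :
    (secV c N (n - 1)).1 = c / N + (1 - c / (n : ℝ)) * (secV c N n).1 := by
  have h0 : (n : ℝ) ≠ 0 := by
    have : n ≠ 0 := by omega
    exact_mod_cast this
  rw [secV_pred N c hc1 n hn1 hn2, max_eq_left (by nlinarith)]
  field_simp
  ring

lemma secV_pred_of_le (N : ℕ) (c : ℝ) (hc1 : c < 1) (n : ℕ) (hn1 : 1 ≤ n) (hn2 : n ≤ N)
    (h : (secV c N n).1 ≤ (n : ℝ) / N) :
    (secV c N (n - 1)).1 = 1 / N + (1 - 1 / (n : ℝ)) * (secV c N n).1 := by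
  have h0 : (n : ℝ) ≠ 0 := by
    have : n ≠ 0 := by omega
    exact_mod_cast this
  rw [secV_pred N c hc1 n hn1 hn2, max_eq_right (by nlinarith)]
  field_simp

lemma sum_le_of_le {m n N : ℕ} (h : m ≤ n) :
    ∑ k ∈ Finset.Ico n N, (1 : ℝ) / k ≤ ∑ k ∈ Finset.Ico m N, (1 : ℝ) / k :=
  Finset.sum_le_sum_of_subset_of_nonneg (Finset.Ico_subset_Ico_left h)
    (fun _ _ _ => by positivity)

/-- Where the harmonic tail is at most `1`, always taking the second branch is optimal. -/
lemma secV_eq (N : ℕ) (c : ℝ) (hc1 : c < 1) (n : ℕ) (hn1 : 1 ≤ n) (hn2 : n ≤ N)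
    (hS : ∑ k ∈ Finset.Ico n N, (1 : ℝ) / k ≤ 1) :
    (secV c N n).1 = ((n : ℝ) / N) * ∑ k ∈ Finset.Ico n N, (1 : ℝ) / k := by
  induction hn2 using Nat.decreasingInduction with
  | self => rw [secV]; simp
  | of_succ n hn ih =>
    have hS' := (sum_le_of_le (N := N) (Nat.le_succ n)).trans hS
    have ih' := ih (by omega) hS'
    have h := secV_pred_of_le N c hc1 (n + 1) (by omega) hn
      (by rw [ih']; exact mul_le_of_le_one_right (by positivity) hS')
    rw [Nat.add_sub_cancel] at h
    rw [h, harmonic_step N n hn1 hn, ih']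
    have e : 1 - 1 / ((n + 1 : ℕ) : ℝ) = n / ((n : ℝ) + 1) := by
      have : (n : ℝ) + 1 ≠ 0 := by positivity
      push_cast
      field_simp
      ring
    rw [e]

/-- The value in state 0 satisfies the piecewise one-step recursion: for `1 ≤ n ≤ N`,
if `n < n*_N` then `V_{n-1}(0) = c/N + (1 - c/n)·V_n(0)`, while if `n ≥ n*_N` then
`V_{n-1}(0) = 1/N + (1 - 1/n)·V_n(0)`. -/
theorem value_zero_onestep (N : ℕ) (hN : 2 ≤ N) (c : ℝ) (hc0 : 0 ≤ c) (hc1 : c < 1)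
    (n : ℕ) (hn1 : 1 ≤ n) (hn2 : n ≤ N) :
    (n < nstar N →
      (secV c N (n - 1)).1 = c / N + (1 - c / (n : ℝ)) * (secV c N n).1) ∧
    (nstar N ≤ n →
      (secV c N (n - 1)).1 = 1 / N + (1 - 1 / (n : ℝ)) * (secV c N n).1) := by
  constructor
  · intro hlt
    have hS : 1 < ∑ k ∈ Finset.Ico n N, (1 : ℝ) / k := by
      by_contra! hle
      exact Nat.notMem_of_lt_sInf hlt ⟨hn1, hn2, hle⟩
    exact secV_pred_of_ge N c hc1 n hn1 hn2
      ((le_mul_of_one_le_right (by positivity) hS.le).trans (secV_lower N c hc1 n hn1 hn2))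
  · intro hge
    -- The defining set contains `N`, so the infimum `nstar N` is attained.
    have hmem : nstar N ∈
        {n : ℕ | 1 ≤ n ∧ n ≤ N ∧ ∑ k ∈ Finset.Ico n N, (1 : ℝ) / k ≤ 1} :=
      Nat.sInf_mem ⟨N, by omega, le_rfl, by simp⟩
    have hS := (sum_le_of_le (N := N) hge).trans hmem.2.2
    refine secV_pred_of_le N c hc1 n hn1 hn2 ?_
    rw [secV_eq N c hc1 n hn1 hn2 hS]
    exact mul_le_of_le_one_right (by positivity) hS
end

section
/- For every real number c with 0 ≤ c < 1, the rescaled expected accepted index N^{c-1} · E[τ*_N] converges to e^{c-1} / Γ(2-c) as N → ∞, where e is Euler's number and Γ is the real Gamma function. -/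
/-!
Write `m = n*_N - 1`. Since `n S_n - (n-1) S_{n-1} = (1-c) S_{n-1}`, the sum of the `S_{n-1}`
telescopes to `m S_m / (1-c)` (`sum_Sprod`), so that
`E[τ*_N] = m S_m (c/(1-c) + ∑_{k=m}^{N-1} 1/k)`.

By definition of the threshold, `∑_{k=m+1}^{N-1} 1/k ≤ 1 < ∑_{k=m}^{N-1} 1/k`. Divergence of the
harmonic series therefore forces `m → ∞` (`tendsto_nstar_sub_one`), and then both sums tend to `1`
(`tendsto_harmonic_diff`). Hence the bracket tends to `1/(1-c)`, and `H_n - log n → γ` gives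
`log m - log N → -1` (`tendsto_log_diff`).

Finally Euler's product for `Γ(1-c)` yields `n S_n ~ n^{1-c} / Γ(1-c)` (`tendsto_mul_Sprod`), so
`N^{c-1} E[τ*_N]` behaves like `(m/N)^{1-c} / ((1-c) Γ(1-c))`, whose limit is `e^{c-1} / Γ(2-c)`.
-/

open Finset Filter Topology

/-- `S_n(c) = ∏_{k=1}^n (1 - c/k)`, with `S_0(c) = 1` (empty product). -/
noncomputable def Sprod (c : ℝ) (n : ℕ) : ℝ :=
  ∏ k ∈ Finset.Icc 1 n, (1 - c / (k : ℝ))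

lemma Sprod_succ (c : ℝ) (n : ℕ) : Sprod c (n + 1) = Sprod c n * (1 - c / ((n : ℝ) + 1)) := by
  unfold Sprod
  rw [Finset.prod_Icc_succ_top (by omega)]
  push_cast
  rfl

lemma sum_Sprod (c : ℝ) (m : ℕ) :
    (1 - c) * ∑ n ∈ Finset.Icc 1 m, Sprod c (n - 1) = m * Sprod c m := by
  induction m with
  | zero => simp
  | succ m ih =>
    rw [Finset.sum_Icc_succ_top (by omega), mul_add, ih, Sprod_succ]
    have : (m : ℝ) + 1 ≠ 0 := by positivity
    simp only [Nat.add_sub_cancel]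
    push_cast
    field_simp
    ring

lemma prod_eq_factorial_mul_Sprod (c : ℝ) (n : ℕ) :
    ∏ j ∈ Finset.range n, (1 - c + (j : ℝ)) = (n.factorial : ℝ) * Sprod c n := by
  induction n with
  | zero => simp [Sprod]
  | succ n ih =>
    rw [Finset.prod_range_succ, ih, Sprod_succ, Nat.factorial_succ]
    have : (n : ℝ) + 1 ≠ 0 := by positivity
    push_cast
    field_simp
    ring

/-- Euler's limit formula for `Γ(1-c)`, read as the growth rate `n S_n ~ n^{1-c} / Γ(1-c)`. -/
lemma tendsto_mul_Sprod (c : ℝ) (hc1 : c < 1) :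
    Tendsto (fun n : ℕ => (n : ℝ) * Sprod c n * (n : ℝ) ^ (c - 1)) atTop
      (𝓝 (1 / Real.Gamma (1 - c))) := by
  have hG : Real.Gamma (1 - c) ≠ 0 := (Real.Gamma_pos_of_pos (by linarith)).ne'
  have h1 := (Real.GammaSeq_tendsto_Gamma (1 - c)).inv₀ hG
  have h2 : Tendsto (fun n : ℕ => (n : ℝ) / ((n : ℝ) + (1 - c))) atTop (𝓝 1) :=
    tendsto_natCast_div_add_atTop (1 - c)
  have h3 := h1.mul h2
  rw [mul_one, ← one_div] at h3
  refine h3.congr' ?_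
  filter_upwards [eventually_gt_atTop 0] with n hn
  have hn' : (0 : ℝ) < n := by exact_mod_cast hn
  have hf : (n.factorial : ℝ) ≠ 0 := by exact_mod_cast n.factorial_ne_zero
  have hd : (1 - c + (n : ℝ)) ≠ 0 := by linarith
  have hp : (n : ℝ) ^ (1 - c) ≠ 0 := (Real.rpow_pos_of_pos hn' _).ne'
  rw [Real.GammaSeq, Finset.prod_range_succ, prod_eq_factorial_mul_Sprod,
    show c - 1 = -(1 - c) by ring, Real.rpow_neg hn'.le, add_comm (n : ℝ) (1 - c)]
  field_simp

lemma harmonic_succ_real (n : ℕ) :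
    (harmonic (n + 1) : ℝ) = (harmonic n : ℝ) + 1 / ((n : ℝ) + 1) := by
  rw [harmonic_succ]
  push_cast
  rw [one_div]

lemma sum_Ico_eq_harmonic (a b : ℕ) (h : a ≤ b) :
    ∑ k ∈ Finset.Ico (a + 1) (b + 1), (1 : ℝ) / k = (harmonic b : ℝ) - harmonic a := by
  induction b, h using Nat.le_induction with
  | base => simp
  | succ b hb ih =>
    rw [Finset.sum_Ico_succ_top (by omega), ih, harmonic_succ_real]
    push_cast
    ring

/-- The tail of the stopping phase; its `n`-th term is `1/(n-1)`, so the range is shifted by one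
with respect to the harmonic numbers. -/
lemma sum_Icc_eq_harmonic (a b : ℕ) (h : a ≤ b) :
    ∑ n ∈ Finset.Icc (a + 2) (b + 1), 1 / ((n : ℝ) - 1) = (harmonic b : ℝ) - harmonic a := by
  induction b, h using Nat.le_induction with
  | base => simp
  | succ b hb ih =>
    rw [Finset.sum_Icc_succ_top (by omega), ih, harmonic_succ_real]
    push_cast
    ring

lemma nstar_mem (N : ℕ) (hN : 1 ≤ N) :
    1 ≤ nstar N ∧ nstar N ≤ N ∧ ∑ k ∈ Finset.Ico (nstar N) N, (1 : ℝ) / k ≤ 1 :=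
  Nat.sInf_mem (s := {n : ℕ | 1 ≤ n ∧ n ≤ N ∧ ∑ k ∈ Finset.Ico n N, (1 : ℝ) / k ≤ 1})
    ⟨N, hN, le_rfl, by simp⟩

lemma harmonic_diff_le (N : ℕ) (hN : 1 ≤ N) :
    (harmonic (N - 1) : ℝ) - harmonic (nstar N - 1) ≤ 1 := by
  obtain ⟨h1, h2, h3⟩ := nstar_mem N hN
  rw [← sum_Ico_eq_harmonic _ _ (by omega)]
  rwa [Nat.sub_add_cancel h1, Nat.sub_add_cancel hN]

/-- Minimality of the threshold. -/
lemma one_lt_harmonic_diff (N : ℕ) (hN : 1 ≤ N) (hm : 2 ≤ nstar N) :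
    1 < (harmonic (N - 1) : ℝ) - harmonic (nstar N - 2) := by
  obtain ⟨-, h2, -⟩ := nstar_mem N hN
  by_contra! h
  rw [← sum_Ico_eq_harmonic _ _ (by omega), Nat.sub_add_cancel hN] at h
  have : nstar N ≤ nstar N - 2 + 1 := Nat.sInf_le ⟨by omega, by omega, h⟩
  omega

lemma tendsto_harmonic_atTop : Tendsto (fun n : ℕ => (harmonic n : ℝ)) atTop atTop := by
  refine tendsto_atTop_mono (fun n => log_add_one_le_harmonic n) ?_
  exact Real.tendsto_log_atTop.comp (tendsto_natCast_atTop_atTop.comp (tendsto_add_atTop_nat 1))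

lemma monotone_harmonic_real : Monotone (fun n : ℕ => (harmonic n : ℝ)) := by
  refine monotone_nat_of_le_succ fun n => ?_
  rw [harmonic_succ_real]
  have : (0 : ℝ) ≤ 1 / ((n : ℝ) + 1) := by positivity
  linarith

lemma tendsto_nstar_sub_one : Tendsto (fun N => nstar N - 1) atTop atTop := by
  rw [tendsto_atTop]
  intro K
  have h := (tendsto_harmonic_atTop.comp (tendsto_sub_atTop_nat 1)).eventually_gt_atTop
    (1 + (harmonic K : ℝ))
  filter_upwards [h, eventually_ge_atTop 1] with N hN hN1
  by_contra! hlt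
  have h1 := harmonic_diff_le N hN1
  have h2 : (harmonic (nstar N - 1) : ℝ) ≤ harmonic K := monotone_harmonic_real hlt.le
  simp only [Function.comp_apply] at hN
  linarith

lemma tendsto_harmonic_diff :
    Tendsto (fun N => (harmonic (N - 1) : ℝ) - harmonic (nstar N - 1)) atTop (𝓝 1) := by
  have hinv : Tendsto (fun N => 1 - 1 / ((nstar N - 1 : ℕ) : ℝ)) atTop (𝓝 1) := by
    have h := (tendsto_one_div_atTop_nhds_zero_nat (𝕜 := ℝ)).comp tendsto_nstar_sub_one
    simpa only [sub_zero, Function.comp_apply] using h.const_sub 1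
  refine tendsto_of_tendsto_of_tendsto_of_le_of_le' hinv tendsto_const_nhds ?_ ?_
  · filter_upwards [tendsto_nstar_sub_one.eventually_ge_atTop 1, eventually_ge_atTop 1]
      with N hm hN
    have h := one_lt_harmonic_diff N hN (by omega)
    obtain ⟨k, hk⟩ : ∃ k, nstar N = k + 2 := ⟨nstar N - 2, by omega⟩
    simp only [hk, Nat.add_sub_cancel, show k + 2 - 1 = k + 1 by omega] at h ⊢
    rw [harmonic_succ_real]
    push_cast
    linarith
  · filter_upwards [eventually_ge_atTop 1] with N hN using harmonic_diff_le N hN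

/-- Equivalently, `n*_N / N → 1/e`. -/
lemma tendsto_log_diff :
    Tendsto (fun N : ℕ => Real.log ((nstar N - 1 : ℕ) : ℝ) - Real.log N) atTop (𝓝 (-1)) := by
  have hN := Real.tendsto_harmonic_sub_log
  have hm := hN.comp tendsto_nstar_sub_one
  have hinv : Tendsto (fun N : ℕ => 1 / (N : ℝ)) atTop (𝓝 0) := tendsto_one_div_atTop_nhds_zero_nat
  have h := ((hN.sub hm).sub tendsto_harmonic_diff).sub hinv
  have e : Real.eulerMascheroniConstant - Real.eulerMascheroniConstant - 1 - 0 = -1 := by ring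
  rw [e] at h
  refine h.congr' ?_
  filter_upwards [eventually_ge_atTop 1] with N hN
  obtain ⟨k, rfl⟩ : ∃ k, N = k + 1 := ⟨N - 1, by omega⟩
  simp only [Function.comp_apply, Nat.add_sub_cancel]
  rw [harmonic_succ_real]
  push_cast
  ring

/-- For every real `c` with `0 ≤ c < 1`, the rescaled expected accepted index
`N^{c-1}·E[τ*_N]`, where
`E[τ*_N] = c·∑_{n=1}^{n*_N-1} S_{n-1}(c) + S_{n*_N-1}(c)·(n*_N-1)·∑_{n=n*_N}^{N} 1/(n-1)`,
converges to `e^{c-1}/Γ(2-c)` as `N → ∞`. -/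
theorem expected_index_tendsto (c : ℝ) (hc0 : 0 ≤ c) (hc1 : c < 1) :
    Filter.Tendsto
      (fun N : ℕ => (N : ℝ) ^ (c - 1) *
        (c * ∑ n ∈ Finset.Icc 1 (nstar N - 1), Sprod c (n - 1) +
          Sprod c (nstar N - 1) * ((nstar N : ℝ) - 1) *
            ∑ n ∈ Finset.Icc (nstar N) N, 1 / ((n : ℝ) - 1)))
      Filter.atTop (nhds (Real.exp (c - 1) / Real.Gamma (2 - c))) := by
  have hc : 1 - c ≠ 0 := by linarith
  have hS := (tendsto_mul_Sprod c hc1).comp tendsto_nstar_sub_one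
  have hexp : Tendsto (fun N : ℕ =>
      Real.exp ((1 - c) * (Real.log ((nstar N - 1 : ℕ) : ℝ) - Real.log N))) atTop
      (𝓝 (Real.exp ((1 - c) * (-1)))) :=
    (Real.continuous_exp.tendsto _).comp (tendsto_log_diff.const_mul (1 - c))
  have hT : Tendsto (fun N : ℕ => c / (1 - c) +
      ((harmonic (N - 1) : ℝ) - harmonic (nstar N - 1) + 1 / ((nstar N - 1 : ℕ) : ℝ))) atTop
      (𝓝 (c / (1 - c) + (1 + 0))) :=
    (tendsto_harmonic_diff.add
      (tendsto_one_div_atTop_nhds_zero_nat.comp tendsto_nstar_sub_one)).const_add _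
  have h := (hS.mul hexp).mul hT
  have hlim : 1 / Real.Gamma (1 - c) * Real.exp ((1 - c) * (-1)) * (c / (1 - c) + (1 + 0)) =
      Real.exp (c - 1) / Real.Gamma (2 - c) := by
    have hG : Real.Gamma (1 - c) ≠ 0 := (Real.Gamma_pos_of_pos (by linarith)).ne'
    rw [show 2 - c = (1 - c) + 1 by ring, Real.Gamma_add_one hc,
      show (1 - c) * (-1) = c - 1 by ring]
    field_simp
    ring
  rw [hlim] at h
  refine h.congr' ?_
  filter_upwards [tendsto_nstar_sub_one.eventually_ge_atTop 1, eventually_ge_atTop 1] with N hm hN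
  obtain ⟨-, hle, -⟩ := nstar_mem N hN
  obtain ⟨k, hk⟩ : ∃ k, nstar N = k + 2 := ⟨nstar N - 2, by omega⟩
  obtain ⟨M, rfl⟩ : ∃ M, N = M + 1 := ⟨N - 1, by omega⟩
  simp only [Function.comp_apply, hk, Nat.add_sub_cancel, show k + 2 - 1 = k + 1 by omega]
  rw [hk] at hle
  have hsum : ∑ n ∈ Finset.Icc 1 (k + 1), Sprod c (n - 1) =
      ((k + 1 : ℕ) : ℝ) * Sprod c (k + 1) / (1 - c) := by
    rw [← sum_Sprod]
    field_simp
  have hm0 : (0 : ℝ) < ((k + 1 : ℕ) : ℝ) := by positivity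
  have hN0 : (0 : ℝ) < ((M + 1 : ℕ) : ℝ) := by positivity
  -- The powers of `m = k + 1` cancel, leaving `N ^ (c - 1)`.
  have hpow : ((k + 1 : ℕ) : ℝ) ^ (c - 1) *
      Real.exp ((1 - c) * (Real.log ((k + 1 : ℕ) : ℝ) - Real.log ((M + 1 : ℕ) : ℝ))) =
      ((M + 1 : ℕ) : ℝ) ^ (c - 1) := by
    rw [Real.rpow_def_of_pos hm0, Real.rpow_def_of_pos hN0, ← Real.exp_add]
    congr 1
    ring
  rw [hsum, sum_Icc_eq_harmonic k M (by omega), ← hpow, harmonic_succ_real]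
  push_cast
  ring
end

section
/- For every real number c with 0 ≤ c < 1, the sequence N^{c-1} · (n*_N - 1) · S_{n*_N - 1}(c) · ∑_{n=n*_N}^{N} 1/(n-1) converges to e^{c-1} / Γ(1-c) as N → ∞, where e is Euler's number and Γ is the real Gamma function. -/
/-!
Put `m = n*_N - 1` and `H = ∑_{k=m}^{N-1} 1/k`, which is the sum in the theorem after a shift of
index.  The term is then `(m/N)^{1-c} · (m^c S_m(c)) · H`, and the three factors converge
separately.

* Minimality of the threshold gives `1 < H ≤ 1 + 1/m`; since the harmonic series diverges,
  `m → ∞`, hence `H → 1` (`tendsto_tailSum`).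
* `harmonic n - log n` converges, so `H - log (N/m) → 0`.  Hence `log (N/m) → 1`, and
  `(m/N)^{1-c} = exp ((c-1) log (N/m)) → e^{c-1}` (`tendsto_log_div`).
* Euler's limit formula for `Γ(1-c)` gives `m^c S_m(c) → 1/Γ(1-c)` (`tendsto_rpow_mul_Sprod`).
-/

open Finset Filter Topology

lemma nstar_spec {N : ℕ} (hN : 1 ≤ N) :
    1 ≤ nstar N ∧ nstar N ≤ N ∧ ∑ k ∈ Finset.Ico (nstar N) N, (1 : ℝ) / k ≤ 1 :=
  Nat.sInf_mem (s := {n : ℕ | 1 ≤ n ∧ n ≤ N ∧ ∑ k ∈ Finset.Ico n N, (1 : ℝ) / k ≤ 1})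
    ⟨N, hN, le_rfl, by simp⟩

lemma sum_Ico_one_div_eq {m N : ℕ} (hm : 1 ≤ m) (hmN : m ≤ N) :
    ∑ k ∈ Finset.Ico m N, (1 : ℝ) / k
      = ((harmonic N : ℝ) - 1 / N) - ((harmonic m : ℝ) - 1 / m) := by
  induction N, hmN using Nat.le_induction with
  | base => simp
  | succ n hmn ih =>
    have hn : (n : ℝ) ≠ 0 := by
      have : 1 ≤ n := hm.trans hmn
      positivity
    rw [Finset.sum_Ico_succ_top hmn, ih, harmonic_succ]
    push_cast
    ring

/-- A bounded threshold would force the harmonic sums to be bounded. -/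
lemma tendsto_nstar : Tendsto nstar atTop atTop := by
  rw [tendsto_atTop]
  intro M
  have hdiv : Tendsto (fun n : ℕ => ∑ i ∈ Finset.range n, (1 : ℝ) / i) atTop atTop :=
    (not_summable_iff_tendsto_nat_atTop_of_nonneg fun _ => by positivity).mp
      Real.not_summable_one_div_natCast
  filter_upwards [hdiv.eventually_gt_atTop (1 + ∑ i ∈ Finset.range M, (1 : ℝ) / i),
    eventually_ge_atTop 1, eventually_ge_atTop M] with N h hN hMN
  by_contra! hlt
  obtain ⟨-, -, hs⟩ := nstar_spec hN
  have h1 : ∑ k ∈ Finset.Ico M N, (1 : ℝ) / k ≤ ∑ k ∈ Finset.Ico (nstar N) N, (1 : ℝ) / k :=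
    Finset.sum_le_sum_of_subset_of_nonneg (Finset.Ico_subset_Ico_left hlt.le)
      (fun _ _ _ => by positivity)
  have h2 := Finset.sum_range_add_sum_Ico (fun i : ℕ => (1 : ℝ) / i) hMN
  linarith

/-- The sum started one step before the threshold lies in `(1, 1 + 1/m]`, with `m = n*_N - 1`. -/
lemma tendsto_tailSum :
    Tendsto (fun N => ∑ k ∈ Finset.Ico (nstar N - 1) N, (1 : ℝ) / k) atTop (𝓝 1) := by
  have hub : Tendsto (fun N => 1 + (1 : ℝ) / ((nstar N - 1 : ℕ) : ℝ)) atTop (𝓝 1) := by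
    simpa using (tendsto_one_div_atTop_nhds_zero_nat (𝕜 := ℝ)).comp tendsto_nstar_sub_one
      |>.const_add 1
  refine tendsto_of_tendsto_of_tendsto_of_le_of_le' tendsto_const_nhds hub ?_ ?_
  · filter_upwards [eventually_ge_atTop 1, tendsto_nstar.eventually_ge_atTop 2] with N hN h2
    obtain ⟨-, hle, -⟩ := nstar_spec hN
    by_contra! hlt
    have : nstar N ≤ nstar N - 1 := Nat.sInf_le ⟨by omega, by omega, hlt.le⟩
    omega
  · filter_upwards [eventually_ge_atTop 1, tendsto_nstar.eventually_ge_atTop 2] with N hN h2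
    obtain ⟨-, hle, hs⟩ := nstar_spec hN
    rw [Finset.sum_eq_sum_Ico_succ_bot (by omega), Nat.sub_add_cancel (by omega)]
    linarith

lemma tendsto_log_div :
    Tendsto (fun N : ℕ => Real.log (N : ℝ) - Real.log ((nstar N - 1 : ℕ) : ℝ)) atTop (𝓝 1) := by
  have hg : Tendsto (fun n : ℕ => (harmonic n : ℝ) - Real.log n - 1 / n) atTop
      (𝓝 Real.eulerMascheroniConstant) := by
    simpa using Real.tendsto_harmonic_sub_log.sub (tendsto_one_div_atTop_nhds_zero_nat (𝕜 := ℝ))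
  have h := tendsto_tailSum.sub (hg.sub (hg.comp tendsto_nstar_sub_one))
  rw [sub_self, sub_zero] at h
  refine h.congr' ?_
  filter_upwards [eventually_ge_atTop 1, tendsto_nstar.eventually_ge_atTop 2] with N hN h2
  obtain ⟨-, hle, -⟩ := nstar_spec hN
  rw [sum_Ico_one_div_eq (by omega) (by omega)]
  simp only [Function.comp_apply]
  ring

lemma Sprod_pos {c : ℝ} (hc1 : c < 1) (m : ℕ) : 0 < Sprod c m := by
  refine Finset.prod_pos fun k hk => ?_
  have hk1 : (1 : ℝ) ≤ k := by exact_mod_cast (Finset.mem_Icc.mp hk).1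
  rw [sub_pos, div_lt_one (by linarith)]
  linarith

lemma prod_range_eq_factorial_mul_Sprod (c : ℝ) (m : ℕ) :
    ∏ j ∈ Finset.range m, (1 - c + (j : ℝ)) = m.factorial * Sprod c m := by
  induction m with
  | zero => simp [Sprod]
  | succ n ih =>
    rw [Finset.prod_range_succ, ih, Sprod, Sprod, Finset.prod_Icc_succ_top (by omega),
      Nat.factorial_succ]
    push_cast
    field_simp
    ring

/-- Euler's limit formula at `1 - c`: `GammaSeq (1 - c) m = m^{1-c} / (S_m(c) (m + 1 - c))`. -/
lemma tendsto_rpow_mul_Sprod {c : ℝ} (hc1 : c < 1) :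
    Tendsto (fun m : ℕ => (m : ℝ) ^ c * Sprod c m) atTop (𝓝 (1 / Real.Gamma (1 - c))) := by
  have hG : Real.Gamma (1 - c) ≠ 0 := (Real.Gamma_pos_of_pos (by linarith)).ne'
  have h := (tendsto_natCast_div_add_atTop (1 - c)).div (Real.GammaSeq_tendsto_Gamma (1 - c)) hG
  refine h.congr' ?_
  filter_upwards [eventually_ge_atTop 1] with m hm
  have hm0 : (0 : ℝ) < m := by exact_mod_cast hm
  have hS := (Sprod_pos hc1 m).ne'
  have hf : (m.factorial : ℝ) ≠ 0 := by positivity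
  have hd : 1 - c + (m : ℝ) ≠ 0 := by linarith
  have hp := (Real.rpow_pos_of_pos hm0 c).ne'
  simp only [Pi.div_apply]
  rw [Real.GammaSeq, Finset.prod_range_succ, prod_range_eq_factorial_mul_Sprod,
    Real.rpow_sub hm0, Real.rpow_one, add_comm (m : ℝ)]
  field_simp

/-- For every real `c` with `0 ≤ c < 1`, the sequence
`N^{c-1}·(n*_N-1)·S_{n*_N-1}(c)·∑_{n=n*_N}^{N} 1/(n-1)` converges to `e^{c-1}/Γ(1-c)`
as `N → ∞`. -/
theorem second_term_tendsto (c : ℝ) (hc0 : 0 ≤ c) (hc1 : c < 1) :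
    Filter.Tendsto
      (fun N : ℕ => (N : ℝ) ^ (c - 1) * ((nstar N : ℝ) - 1) * Sprod c (nstar N - 1) *
        ∑ n ∈ Finset.Icc (nstar N) N, 1 / ((n : ℝ) - 1))
      Filter.atTop (nhds (Real.exp (c - 1) / Real.Gamma (1 - c))) := by
  have hlog : Tendsto (fun N : ℕ => Real.exp ((c - 1) *
      (Real.log (N : ℝ) - Real.log ((nstar N - 1 : ℕ) : ℝ)))) atTop (𝓝 (Real.exp (c - 1))) := by
    simpa [Function.comp_def] using
      (Real.continuous_exp.tendsto _).comp (tendsto_log_div.const_mul (c - 1))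
  have h := (hlog.mul ((tendsto_rpow_mul_Sprod hc1).comp tendsto_nstar_sub_one)).mul
    tendsto_tailSum
  rw [mul_one, mul_one_div] at h
  refine h.congr' ?_
  filter_upwards [eventually_ge_atTop 1, tendsto_nstar.eventually_ge_atTop 2] with N hN h2
  have hsum : ∑ n ∈ Finset.Icc (nstar N) N, 1 / ((n : ℝ) - 1)
      = ∑ k ∈ Finset.Ico (nstar N - 1) N, (1 : ℝ) / k := by
    obtain ⟨m, hm⟩ : ∃ m, nstar N = m + 1 := ⟨nstar N - 1, by omega⟩
    rw [hm, ← Finset.Ico_add_one_right_eq_Icc, Nat.add_sub_cancel,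
      ← Finset.sum_Ico_add' (fun n : ℕ => 1 / ((n : ℝ) - 1)) m N 1]
    simp
  have hcast : (nstar N : ℝ) - 1 = ((nstar N - 1 : ℕ) : ℝ) := by
    rw [Nat.cast_sub (by omega), Nat.cast_one]
  rw [hsum, hcast]
  have hm0 : (0 : ℝ) < ((nstar N - 1 : ℕ) : ℝ) := by
    exact_mod_cast (by omega : 0 < nstar N - 1)
  have hN0 : (0 : ℝ) < N := by exact_mod_cast hN
  simp only [Function.comp_apply]
  generalize ((nstar N - 1 : ℕ) : ℝ) = x at hm0 ⊢
  -- `x = x^c · x^{1-c}` on the right-hand side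
  have hx : x = Real.exp (-(c - 1) * Real.log x) * x ^ c := by
    rw [Real.rpow_def_of_pos hm0, ← Real.exp_add]
    conv_lhs => rw [← Real.exp_log hm0]
    congr 1
    ring
  have hexp : Real.exp ((c - 1) * (Real.log N - Real.log x)) * x ^ c = (N : ℝ) ^ (c - 1) * x := by
    conv_rhs => rw [hx]
    rw [Real.rpow_def_of_pos hN0, ← mul_assoc, ← Real.exp_add]
    congr 2
    ring
  rw [← mul_assoc, hexp]
end
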